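/- Let (Ω, P) be a probability space, K ≥ 1, and let X : Fin K → Ω → 𝒳 be a family of measurable random variables with values in a finite measurable space with measurable singletons; write X_all : Ω → (Fin K → 𝒳) for ω ↦ (fun i => X_i ω). Let 𝒮 ⊆ Fin K be a nonempty set of indices and, for each k ∈ 𝒮, let Y_k : Ω → 𝒴 and S_k : Ω → 𝒮' be finitely-valued random variables (the channel output and the genie side information of user k). If ∑_{k∈𝒮} ( H[S_k] − H[Y_k | X_k] − I[S_k : X_all | ⟨X_k, Y_k⟩] ) ≤ 0, then ∑_{k∈𝒮} I[X_k : ⟨Y_k, S_k⟩] ≤ ∑_{k∈𝒮} ( H[Y_k | S_k] − H[S_k | ⟨Y_k, X_all⟩] ). -/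

import Mathlib

open MeasureTheory

/-- Shannon entropy `H[X]` of a finitely-valued random variable `X` on a measure space. -/
noncomputable def entropy {Ω S : Type*} [MeasurableSpace Ω] [Fintype S] [MeasurableSpace S]
    (P : Measure Ω) (X : Ω → S) : ℝ :=
  ∑ x : S, Real.negMulLog ((P.map X) {x}).toReal

/-- Conditional entropy `H[X | Y] = H[X, Y] − H[Y]`. -/
noncomputable def condEntropy {Ω S T : Type*} [MeasurableSpace Ω]
    [Fintype S] [MeasurableSpace S] [Fintype T] [MeasurableSpace T]
    (P : Measure Ω) (X : Ω → S) (Y : Ω → T) : ℝ :=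
  entropy P (fun ω => (X ω, Y ω)) - entropy P Y

/-- Mutual information `I[X : Y] = H[X] + H[Y] − H[X, Y]`. -/
noncomputable def mutualInfo {Ω S T : Type*} [MeasurableSpace Ω]
    [Fintype S] [MeasurableSpace S] [Fintype T] [MeasurableSpace T]
    (P : Measure Ω) (X : Ω → S) (Y : Ω → T) : ℝ :=
  entropy P X + entropy P Y - entropy P (fun ω => (X ω, Y ω))

/-- Conditional mutual information
`I[X : Y | Z] = H[X, Z] + H[Y, Z] − H[X, Y, Z] − H[Z]`. -/
noncomputable def condMutualInfo {Ω S T U : Type*} [MeasurableSpace Ω]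
    [Fintype S] [MeasurableSpace S] [Fintype T] [MeasurableSpace T]
    [Fintype U] [MeasurableSpace U]
    (P : Measure Ω) (X : Ω → S) (Y : Ω → T) (Z : Ω → U) : ℝ :=
  entropy P (fun ω => (X ω, Z ω)) + entropy P (fun ω => (Y ω, Z ω))
    - entropy P (fun ω => (X ω, Y ω, Z ω)) - entropy P Z

/-- Entropy is invariant under injective relabelling. -/
theorem entropy_relabel {Ω S T : Type*} [MeasurableSpace Ω]
    [Fintype S] [MeasurableSpace S] [MeasurableSingletonClass S]
    [Fintype T] [MeasurableSpace T] [MeasurableSingletonClass T]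
    (P : Measure Ω) (X : Ω → S) (Y : Ω → T) (hX : Measurable X) (hY : Measurable Y)
    (f : S → T) (hf : Function.Injective f) (hfX : ∀ ω, Y ω = f (X ω)) :
    entropy P X = entropy P Y := by
  unfold entropy
  refine Fintype.sum_of_injective f hf _ _ ?_ ?_
  · intro t ht
    have h : Y ⁻¹' {t} = ∅ := by
      ext ω
      simp only [Set.mem_preimage, Set.mem_singleton_iff, Set.mem_empty_iff_false, iff_false]
      intro h
      exact ht ⟨X ω, by rw [← hfX, h]⟩
    rw [Measure.map_apply hY (measurableSet_singleton t), h]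
    simp
  · intro x
    have h : Y ⁻¹' {f x} = X ⁻¹' {x} := by
      ext ω
      simp [hfX, hf.eq_iff]
    rw [Measure.map_apply hY (measurableSet_singleton _),
      Measure.map_apply hX (measurableSet_singleton _), h]

/-- Genie-aided sum-rate bound (step (a) of the proof of bound (11)):
if the genie signals `S_k` are chosen so that
`∑_{k∈𝒮} ( H[S_k] − H[Y_k | X_k] − I[S_k : X_all | ⟨X_k, Y_k⟩] ) ≤ 0`, then
`∑_{k∈𝒮} I[X_k : ⟨Y_k, S_k⟩] ≤ ∑_{k∈𝒮} ( H[Y_k | S_k] − H[S_k | ⟨Y_k, X_all⟩] )`. -/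
theorem genie_aided_sum_bound
    {Ω 𝒳 𝒴 𝒮' : Type*} [MeasurableSpace Ω]
    [Fintype 𝒳] [MeasurableSpace 𝒳] [MeasurableSingletonClass 𝒳]
    [Fintype 𝒴] [MeasurableSpace 𝒴] [MeasurableSingletonClass 𝒴]
    [Fintype 𝒮'] [MeasurableSpace 𝒮'] [MeasurableSingletonClass 𝒮']
    (K : ℕ) (hK : 1 ≤ K)
    (X : Fin K → Ω → 𝒳) (hX : ∀ k, Measurable (X k))
    (Y : Fin K → Ω → 𝒴) (hY : ∀ k, Measurable (Y k))
    (S : Fin K → Ω → 𝒮') (hS : ∀ k, Measurable (S k))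
    (𝒮 : Finset (Fin K)) (h𝒮 : 𝒮.Nonempty)
    (P : Measure Ω) [IsProbabilityMeasure P]
    (hgenie : ∑ k ∈ 𝒮,
        (entropy P (S k) - condEntropy P (Y k) (X k)
          - condMutualInfo P (S k) (fun ω (i : Fin K) => X i ω)
              (fun ω => (X k ω, Y k ω))) ≤ 0) :
    ∑ k ∈ 𝒮, mutualInfo P (X k) (fun ω => (Y k ω, S k ω)) ≤
      ∑ k ∈ 𝒮, (condEntropy P (Y k) (S k)
        - condEntropy P (S k) (fun ω => (Y k ω, fun i : Fin K => X i ω))) := by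
  have hA : Measurable (fun ω (i : Fin K) => X i ω) := measurable_pi_lambda _ hX
  have key : ∀ k, mutualInfo P (X k) (fun ω => (Y k ω, S k ω))
      - (condEntropy P (Y k) (S k)
        - condEntropy P (S k) (fun ω => (Y k ω, fun i : Fin K => X i ω)))
      = entropy P (S k) - condEntropy P (Y k) (X k)
          - condMutualInfo P (S k) (fun ω (i : Fin K) => X i ω)
              (fun ω => (X k ω, Y k ω)) := by
    intro k
    have hXk := hX k
    have hYk := hY k
    have hSk := hS k
    have e1 : entropy P (fun ω => (Y k ω, X k ω)) = entropy P (fun ω => (X k ω, Y k ω)) :=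
      entropy_relabel P _ _ (hYk.prodMk hXk) (hXk.prodMk hYk) (fun p => (p.2, p.1))
        (by rintro ⟨a, b⟩ ⟨c, d⟩ h; simp_all) (fun _ => rfl)
    have e2 : entropy P (fun ω => (X k ω, Y k ω, S k ω))
        = entropy P (fun ω => (S k ω, X k ω, Y k ω)) :=
      entropy_relabel P _ _ (hXk.prodMk (hYk.prodMk hSk)) (hSk.prodMk (hXk.prodMk hYk))
        (fun p => (p.2.2, p.1, p.2.1))
        (by rintro ⟨a, b, c⟩ ⟨d, e, f⟩ h; simp_all) (fun _ => rfl)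
    have e3 : entropy P (fun ω => (Y k ω, fun i : Fin K => X i ω))
        = entropy P (fun ω => ((fun i : Fin K => X i ω), X k ω, Y k ω)) :=
      entropy_relabel P _ _ (hYk.prodMk hA) (hA.prodMk (hXk.prodMk hYk))
        (fun p => (p.2, p.2 k, p.1))
        (by rintro ⟨a, b⟩ ⟨c, d⟩ h; simp_all) (fun _ => rfl)
    have e4 : entropy P (fun ω => (S k ω, Y k ω, fun i : Fin K => X i ω))
        = entropy P (fun ω => (S k ω, (fun i : Fin K => X i ω), X k ω, Y k ω)) :=
      entropy_relabel P _ _ (hSk.prodMk (hYk.prodMk hA))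
        (hSk.prodMk (hA.prodMk (hXk.prodMk hYk)))
        (fun p => (p.1, p.2.2, p.2.2 k, p.2.1))
        (by rintro ⟨a, b, c⟩ ⟨d, e, f⟩ h; simp_all) (fun _ => rfl)
    simp only [mutualInfo, condEntropy, condMutualInfo]
    linarith
  rw [← sub_nonpos, ← Finset.sum_sub_distrib, Finset.sum_congr rfl (fun k _ => key k)]
  exact hgenie
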